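/- Let (X, d_m) be a metric space and let γ > 0 be a real number. Define d(x,y) = γ·(e^{d_m(x,y)} − 1) for all x,y ∈ X. Then d is a suprametric on X with constant ρ = 1/γ; in particular, d(x,y) ≤ d(x,z) + d(z,y) + (1/γ)·d(x,z)·d(z,y) for all x,y,z ∈ X, d(x,y) = 0 iff x = y, and d(x,y) = d(y,x). -/

import Mathlib

/-- **Example.** If `(X, d_m)` is a metric space and `γ > 0`, then
`d (x, y) = γ * (e^{d_m (x, y)} - 1)` is a suprametric on `X` with constant
`ρ = 1 / γ`. -/
theorem exp_of_metric_is_suprametric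
    {X : Type*} [MetricSpace X] (γ : ℝ) (hγ : 0 < γ) :
    (∀ x y z : X,
        γ * (Real.exp (dist x y) - 1) ≤
          γ * (Real.exp (dist x z) - 1) + γ * (Real.exp (dist z y) - 1) +
            (1 / γ) * (γ * (Real.exp (dist x z) - 1)) *
              (γ * (Real.exp (dist z y) - 1))) ∧
    (∀ x y : X, γ * (Real.exp (dist x y) - 1) = 0 ↔ x = y) ∧
    (∀ x y : X, γ * (Real.exp (dist x y) - 1) = γ * (Real.exp (dist y x) - 1)) := by
  refine ⟨fun x y z => ?_, fun x y => ?_, fun x y => by rw [dist_comm]⟩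
  · have h : Real.exp (dist x y) ≤ Real.exp (dist x z) * Real.exp (dist z y) := by
      rw [← Real.exp_add]
      exact Real.exp_le_exp.mpr (dist_triangle x z y)
    have e : γ * (Real.exp (dist x z) - 1) + γ * (Real.exp (dist z y) - 1) +
            (1 / γ) * (γ * (Real.exp (dist x z) - 1)) *
              (γ * (Real.exp (dist z y) - 1)) =
        γ * (Real.exp (dist x z) * Real.exp (dist z y) - 1) := by
      field_simp
      ring
    rw [e]
    exact mul_le_mul_of_nonneg_left (by linarith) hγ.le
  · simp [hγ.ne', sub_eq_zero]
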